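/- arXiv:2201.02804 — 2 statements merged into one kernel-verified Lean document; each statement's English description precedes it below -/
import Mathlib

section
/- (Equilibrium bribe size, equation (6).) Let n ≥ 1 be a natural number, x ∈ (0,1), 0 ≤ p_h < p ≤ 1, P, F_O, F_C ≥ 0. Assume D := n x(1 − p_h) + x − p > 0 and A := P + p(F_O − F_C) + p_h n F_O > 0. Define the Nash product G(B) = [U_C(B) − U_O(B)]·(p − p_h)·B. Then B* = n x·A / (2D) is strictly positive and is the unique global maximizer of G over B ∈ [0, ∞). -/
/-- The citizen's utility from paying a bribe `B`:
`U_C(B) = P - B - p F_C + p_h (B + n F_O)`. -/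
noncomputable def UC (P p ph FC FO B : ℝ) (n : ℕ) : ℝ :=
  P - B - p * FC + ph * (B + n * FO)

/-- The network's expected utility `U_O(B) = B/n - p(F_O + B/(n x))`. -/
noncomputable def UO (x p FO B : ℝ) (n : ℕ) : ℝ :=
  B / n - p * (FO + B / (n * x))

/-!
The difference `U_C(B) - U_O(B)` is affine in `B`, with intercept `A` and slope `-D / (n x)`. The
Nash product is therefore a concave quadratic vanishing at `B = 0` and at `B = n x A / D`, so that
its vertex is the midpoint `n x A / (2 D)`; completing the square there gives the strict maximum.
-/

theorem sub_mul_mul_eq_vertex_sub_mul_sq {R : Type*} [CommRing R] {a c v : R}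
    (hv : 2 * c * v = a) (b : R) :
    (a - c * b) * b = (a - c * v) * v - c * (b - v) ^ 2 := by
  rw [← hv]
  ring

section NashBargaining

variable (n : ℕ) (x p ph P FO FC B : ℝ)

/-- The Nash product `G(B) = [U_C(B) - U_O(B)] (p - p_h) B` of the bargaining over the bribe. -/
noncomputable def nashProduct : ℝ :=
  (UC P p ph FC FO B n - UO x p FO B n) * ((p - ph) * B)

/-- The equilibrium bribe size `B* = n x A / (2 D)`, the candidate maximizer of the Nash product. -/
noncomputable def equilibriumBribe : ℝ :=
  n * x * (P + p * (FO - FC) + ph * n * FO) / (2 * (n * x * (1 - ph) + x - p))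

variable {n x p ph}

theorem UC_sub_UO_eq_sub_mul (hn : n ≠ 0) (hx : x ≠ 0) :
    UC P p ph FC FO B n - UO x p FO B n =
      (P + p * (FO - FC) + ph * n * FO) - (n * x * (1 - ph) + x - p) / (n * x) * B := by
  unfold UC UO
  field_simp
  ring

theorem two_mul_slope_mul_equilibriumBribe (hn : n ≠ 0) (hx : x ≠ 0)
    (hD : n * x * (1 - ph) + x - p ≠ 0) :
    2 * ((n * x * (1 - ph) + x - p) / (n * x)) * equilibriumBribe n x p ph P FO FC =
      P + p * (FO - FC) + ph * n * FO := by
  unfold equilibriumBribe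
  generalize n * x * (1 - ph) + x - p = D at hD ⊢
  field_simp

theorem nashProduct_eq_sub_mul_sq (hn : n ≠ 0) (hx : x ≠ 0)
    (hD : n * x * (1 - ph) + x - p ≠ 0) :
    nashProduct n x p ph P FO FC B =
      nashProduct n x p ph P FO FC (equilibriumBribe n x p ph P FO FC) -
        (p - ph) * ((n * x * (1 - ph) + x - p) / (n * x)) *
          (B - equilibriumBribe n x p ph P FO FC) ^ 2 := by
  have complete_square := sub_mul_mul_eq_vertex_sub_mul_sq
    (two_mul_slope_mul_equilibriumBribe P FO FC hn hx hD) B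
  simp only [nashProduct, UC_sub_UO_eq_sub_mul P FO FC _ hn hx]
  linear_combination (p - ph) * complete_square

variable {P FO FC B}

theorem equilibriumBribe_pos (hn : n ≠ 0) (hx : 0 < x)
    (hD : 0 < n * x * (1 - ph) + x - p) (hA : 0 < P + p * (FO - FC) + ph * n * FO) :
    0 < equilibriumBribe n x p ph P FO FC := by
  unfold equilibriumBribe
  positivity

theorem nashProduct_lt_nashProduct_equilibriumBribe (hn : n ≠ 0) (hx : 0 < x) (hphp : ph < p)
    (hD : 0 < n * x * (1 - ph) + x - p) (hB : B ≠ equilibriumBribe n x p ph P FO FC) :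
    nashProduct n x p ph P FO FC B <
      nashProduct n x p ph P FO FC (equilibriumBribe n x p ph P FO FC) := by
  have slope_pos : 0 < (n * x * (1 - ph) + x - p) / (n * x) := by positivity
  have deviation_sq_pos : 0 < (B - equilibriumBribe n x p ph P FO FC) ^ 2 :=
    even_two.pow_pos (sub_ne_zero.mpr hB)
  rw [nashProduct_eq_sub_mul_sq P FO FC B hn hx.ne' hD.ne']
  exact sub_lt_self _ (mul_pos (mul_pos (sub_pos.mpr hphp) slope_pos) deviation_sq_pos)

end NashBargaining

theorem equilibrium_bribe_size_general (n : ℕ) (hn : n ≠ 0) (x p ph P FO FC : ℝ)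
    (hx : 0 < x) (hphp : ph < p) (hD : 0 < n * x * (1 - ph) + x - p)
    (hA : 0 < P + p * (FO - FC) + ph * n * FO) :
    0 < equilibriumBribe n x p ph P FO FC ∧
      ∀ B ≠ equilibriumBribe n x p ph P FO FC,
        nashProduct n x p ph P FO FC B <
          nashProduct n x p ph P FO FC (equilibriumBribe n x p ph P FO FC) :=
  ⟨equilibriumBribe_pos hn hx hD hA,
    fun _ hB ↦ nashProduct_lt_nashProduct_equilibriumBribe hn hx hphp hD hB⟩

/-- Equation (6): the equilibrium bribe size
`B* = n x [P + p(F_O - F_C) + p_h n F_O] / (2[n x (1 - p_h) + x - p])`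
is positive and is the unique global maximizer over `[0, ∞)` of the Nash
product `G(B) = [U_C(B) - U_O(B)] (p - p_h) B`. -/
theorem equilibrium_bribe_size (n : ℕ) (hn : 1 ≤ n) (x p ph P FO FC : ℝ)
    (hx : x ∈ Set.Ioo (0 : ℝ) 1) (hph : 0 ≤ ph) (hphp : ph < p) (hp : p ≤ 1)
    (hP : 0 ≤ P) (hFO : 0 ≤ FO) (hFC : 0 ≤ FC)
    (hD : 0 < n * x * (1 - ph) + x - p)
    (hA : 0 < P + p * (FO - FC) + ph * n * FO) :
    0 < n * x * (P + p * (FO - FC) + ph * n * FO) /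
        (2 * (n * x * (1 - ph) + x - p)) ∧
    ∀ B ∈ Set.Ici (0 : ℝ),
      B ≠ n * x * (P + p * (FO - FC) + ph * n * FO) /
            (2 * (n * x * (1 - ph) + x - p)) →
      (UC P p ph FC FO B n - UO x p FO B n) * ((p - ph) * B) <
        (UC P p ph FC FO
              (n * x * (P + p * (FO - FC) + ph * n * FO) /
                (2 * (n * x * (1 - ph) + x - p))) n -
            UO x p FO
              (n * x * (P + p * (FO - FC) + ph * n * FO) /
                (2 * (n * x * (1 - ph) + x - p))) n) *
          ((p - ph) *
            (n * x * (P + p * (FO - FC) + ph * n * FO) /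
              (2 * (n * x * (1 - ph) + x - p)))) := by
  exact (equilibrium_bribe_size_general n (Nat.one_le_iff_ne_zero.mp hn) x p ph P FO FC
    hx.1 hphp hD hA).imp_right fun maximal B _ hB ↦ maximal B hB
end

section
/- (Comparative statics in the detection probability, equation (11).) Let n ≥ 1, x ∈ (0,1), p_h ∈ [0,1), P ≥ 0, F_O ≥ F_C ≥ 0. Regard B*(p) = n x[P + p(F_O − F_C) + p_h n F_O] / (2[n x(1−p_h) + x − p]) as a function of p on the open interval where n x(1−p_h) + x − p > 0. Then dB*/dp = n x·[(F_O − F_C)(n x(1−p_h) + x) + P + p_h n F_O] / (2[n x(1−p_h) + x − p]^2) ≥ 0; in particular B* is monotonically nondecreasing in p on this interval. -/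
/-!
Up to the constant factor `n x / 2`, the bribe is the linear fractional function
`q ↦ (a + q d) / (c - q)` with `c = n x (1 - p_h) + x`, `a = P + p_h n F_O` and `d = F_O - F_C`.
It differs from `(d c + a) / (c - q)` by the constant `d`, so the sign of `d c + a` governs its
monotonicity to the left of the pole `c`.
-/

theorem add_mul_div_sub_eq_div_sub_sub {K : Type*} [Field K] (a d : K) {c q : K} (hq : q ≠ c) :
    (a + q * d) / (c - q) = (d * c + a) / (c - q) - d := by
  have hcq : c - q ≠ 0 := sub_ne_zero.2 hq.symm
  field_simp
  ring

theorem monotoneOn_add_mul_div_sub {K : Type*} [Field K] [LinearOrder K] [IsStrictOrderedRing K]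
    {a c d : K} (h : 0 ≤ d * c + a) :
    MonotoneOn (fun q ↦ (a + q * d) / (c - q)) (Set.Iio c) := by
  intro p hp q hq hpq
  calc (a + p * d) / (c - p)
      = (d * c + a) / (c - p) - d := add_mul_div_sub_eq_div_sub_sub a d hp.ne
    _ ≤ (d * c + a) / (c - q) - d := by
        have hcq : 0 < c - q := sub_pos.2 hq
        gcongr
    _ = (a + q * d) / (c - q) := (add_mul_div_sub_eq_div_sub_sub a d hq.ne).symm

theorem hasDerivAt_add_mul_div_sub {𝕜 : Type*} [NontriviallyNormedField 𝕜] (a d : 𝕜) {c p : 𝕜}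
    (hp : p ≠ c) :
    HasDerivAt (fun q ↦ (a + q * d) / (c - q)) ((d * c + a) / (c - p) ^ 2) p := by
  have numerator : HasDerivAt (fun q ↦ a + q * d) d p := (hasDerivAt_mul_const d).const_add a
  have denominator : HasDerivAt (fun q ↦ c - q) (-1) p := (hasDerivAt_id' p).const_sub c
  refine (numerator.fun_div denominator (sub_ne_zero.2 hp.symm)).congr_deriv ?_
  ring

theorem bribe_monotone_in_detection_prob_general (n x ph P FO FC : ℝ)
    (hn : 0 ≤ n) (hx : 0 ≤ x) (hph : ph ∈ Set.Icc (0 : ℝ) 1)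
    (hP : 0 ≤ P) (hFO : 0 ≤ FO) (hFOC : FC ≤ FO) :
    (∀ p ∈ {q : ℝ | 0 < n * x * (1 - ph) + x - q},
      HasDerivAt
        (fun q : ℝ => n * x * (P + q * (FO - FC) + ph * n * FO) /
          (2 * (n * x * (1 - ph) + x - q)))
        (n * x * ((FO - FC) * (n * x * (1 - ph) + x) + P + ph * n * FO) /
          (2 * (n * x * (1 - ph) + x - p) ^ 2)) p ∧
      0 ≤ n * x * ((FO - FC) * (n * x * (1 - ph) + x) + P + ph * n * FO) /
        (2 * (n * x * (1 - ph) + x - p) ^ 2)) ∧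
    MonotoneOn
      (fun q : ℝ => n * x * (P + q * (FO - FC) + ph * n * FO) /
        (2 * (n * x * (1 - ph) + x - q)))
      {q : ℝ | 0 < n * x * (1 - ph) + x - q} := by
  have pole_nonneg : 0 ≤ n * x * (1 - ph) + x :=
    add_nonneg (mul_nonneg (mul_nonneg hn hx) (sub_nonneg.2 hph.2)) hx
  have factor_nonneg : 0 ≤ n * x / 2 := by positivity
  have numerator_nonneg : 0 ≤ (FO - FC) * (n * x * (1 - ph) + x) + (P + ph * n * FO) :=
    add_nonneg (mul_nonneg (sub_nonneg.2 hFOC) pole_nonneg)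
      (add_nonneg hP (mul_nonneg (mul_nonneg hph.1 hn) hFO))
  simp only [mul_div_mul_comm, add_right_comm P, add_assoc _ P, sub_pos]
  refine ⟨fun p hp ↦ ⟨?derivative, ?nonneg⟩, ?monotone⟩
  case derivative => exact (hasDerivAt_add_mul_div_sub _ _ (ne_of_lt hp)).const_mul _
  case nonneg => exact mul_nonneg factor_nonneg (div_nonneg numerator_nonneg (sq_nonneg _))
  case monotone =>
    exact (monotone_mul_left_of_nonneg factor_nonneg).comp_monotoneOn
      (monotoneOn_add_mul_div_sub numerator_nonneg)

/-- Equation (11): comparative statics of the equilibrium bribe size in the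
detection probability `p`, holding `p_h` fixed, on the open interval where
`n x (1 - p_h) + x - p > 0`.  The derivative is
`n x [(F_O - F_C)(n x (1 - p_h) + x) + P + p_h n F_O] / (2[n x(1-p_h)+x-p]^2) ≥ 0`,
so `B*` is monotonically nondecreasing in `p` there. -/
theorem bribe_monotone_in_detection_prob (n : ℕ) (hn : 1 ≤ n) (x ph P FO FC : ℝ)
    (hx : x ∈ Set.Ioo (0 : ℝ) 1) (hph : ph ∈ Set.Ico (0 : ℝ) 1)
    (hP : 0 ≤ P) (hFC : 0 ≤ FC) (hFOC : FC ≤ FO) :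
    (∀ p ∈ {q : ℝ | 0 < n * x * (1 - ph) + x - q},
      HasDerivAt
        (fun q : ℝ => n * x * (P + q * (FO - FC) + ph * n * FO) /
          (2 * (n * x * (1 - ph) + x - q)))
        (n * x * ((FO - FC) * (n * x * (1 - ph) + x) + P + ph * n * FO) /
          (2 * (n * x * (1 - ph) + x - p) ^ 2)) p ∧
      0 ≤ n * x * ((FO - FC) * (n * x * (1 - ph) + x) + P + ph * n * FO) /
        (2 * (n * x * (1 - ph) + x - p) ^ 2)) ∧
    MonotoneOn
      (fun q : ℝ => n * x * (P + q * (FO - FC) + ph * n * FO) /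
        (2 * (n * x * (1 - ph) + x - q)))
      {q : ℝ | 0 < n * x * (1 - ph) + x - q} :=
  bribe_monotone_in_detection_prob_general n x ph P FO FC n.cast_nonneg hx.1.le
    ⟨hph.1, hph.2.le⟩ hP (hFC.trans hFOC) hFOC
end
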